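/- Let α > 0 and K₂ > 0, let β_W'(ξ) = −sech ξ, and let L denote the operator f ↦ −f'' + (1 − 2 sech²ξ) f. Then there exists a constant C > 0 such that for all C² functions f₁, f₂ : ℝ → ℝ with f₁, f₁', f₁'', f₂, f₂', f₂'' ∈ L²(ℝ) and all μ ∈ ℝ: ∫_ℝ (−L f₂ + α μ β_W')² + ∫_ℝ ((L + K₂) f₁ + μ β_W')² + (∫_ℝ β_W' f₂)² ≥ C (∫_ℝ (f₁² + (f₁')² + (f₁'')²) + ∫_ℝ (f₂² + (f₂')² + (f₂'')²) + μ²). -/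

import Mathlib

/-!
The operator factorizes as `L = A* A` with `A = d/dξ + tanh ξ`, while `A A* = -d²/dξ² + 1`.
Writing `h = A f`, this gives `⟨L f, f⟩ = ‖h‖²` (`H2.integral_L_mul`), `⟨L f, sech⟩ = 0`
(`H2.integral_L_mul_sech`) and `‖L f‖² = ‖h'‖² + ‖h‖² ≥ ‖h‖²` (`H2.integral_h_sq_le`).

* Pairing the first component with `sech` kills `L f₂`, so it controls `α μ ‖sech‖²`, hence `μ`.
  The terms containing `μ` can then be moved to the other side in both components.
* For `f₁`, the form `⟨(L + K₂) f, f⟩ = ‖A f‖² + K₂ ‖f‖²` is coercive, so `(L + K₂) f₁` controls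
  `f₁` in `L²` (`H2.sq_le_of_shift`).
* For `f₂`, it remains to bound `f` by `A f` and `⟨sech, f⟩`. Subtract the multiple of `sech`
  (which spans `ker A`) that makes the difference `p` vanish at `0`. On each half-line the first
  order operator `A` is bounded below on functions vanishing at `0`, which is seen by integrating
  the derivative of `(2 - tanh) p²` (`half_line_bound`). The coefficient of `sech` is then read off
  from `⟨sech, f⟩` (`H2.sq_le_of_sech`).

Finally `f''` is recovered from the equation, and `f'` by interpolation (`H2.norm_le`).
-/

open MeasureTheory Filter

noncomputable section

/-- The linearized operator L = −d²/dξ² + (1 − 2 sech²ξ) applied to f. -/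
def Lop (f : ℝ → ℝ) (ξ : ℝ) : ℝ :=
  -deriv (deriv f) ξ + (1 - 2 * (1 / Real.cosh ξ) ^ 2) * f ξ

/-- β_W'(ξ) = −sech ξ. -/
def betaW' (ξ : ℝ) : ℝ := -(1 / Real.cosh ξ)

/-! ### The functions `sech` and `tanh` -/

/-- The hyperbolic secant, so that `betaW' = -sech`. -/
def sech (x : ℝ) : ℝ := 1 / Real.cosh x

lemma tanh_sq_add_sech_sq (x : ℝ) : Real.tanh x ^ 2 + sech x ^ 2 = 1 := by
  have h := Real.cosh_sq x
  have h0 := (Real.cosh_pos x).ne'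
  rw [sech, Real.tanh_eq_sinh_div_cosh]
  field_simp
  linarith

lemma hasDerivAt_tanh' (x : ℝ) : HasDerivAt Real.tanh (sech x ^ 2) x := by
  have h0 := (Real.cosh_pos x).ne'
  have h := (Real.hasDerivAt_sinh x).div (Real.hasDerivAt_cosh x) h0
  have e : Real.tanh = Real.sinh / Real.cosh := by
    ext y; simp [Real.tanh_eq_sinh_div_cosh]
  rw [e]
  refine h.congr_deriv ?_
  have := Real.cosh_sq x
  rw [sech]
  field_simp
  linarith

lemma hasDerivAt_sech (x : ℝ) : HasDerivAt sech (-(Real.tanh x * sech x)) x := by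
  have h0 := (Real.cosh_pos x).ne'
  have h := (Real.hasDerivAt_cosh x).inv h0
  have e : sech = Real.cosh⁻¹ := by ext y; simp [sech]
  rw [e]
  refine h.congr_deriv ?_
  rw [Real.tanh_eq_sinh_div_cosh, Pi.inv_apply]
  field_simp

lemma continuous_tanh' : Continuous Real.tanh :=
  continuous_iff_continuousAt.2 fun x => (hasDerivAt_tanh' x).continuousAt

lemma continuous_sech : Continuous sech :=
  continuous_iff_continuousAt.2 fun x => (hasDerivAt_sech x).continuousAt

lemma sech_pos (x : ℝ) : 0 < sech x := one_div_pos.2 (Real.cosh_pos x)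

lemma memLp_sech : MemLp sech 2 volume := by
  rw [memLp_two_iff_integrable_sq continuous_sech.aestronglyMeasurable]
  refine integrable_inv_one_add_sq.mono' (continuous_sech.pow 2).aestronglyMeasurable ?_
  filter_upwards with x
  rw [Real.norm_of_nonneg (sq_nonneg _), sech, one_div, inv_pow]
  -- `cosh² = 1 + sinh²` and `|sinh x| ≥ |x|`
  have h1 := Real.cosh_sq x
  have h2 : x ^ 2 ≤ Real.sinh x ^ 2 := by
    rw [sq_le_sq]
    rcases le_total 0 x with h | h
    · rw [abs_of_nonneg h, abs_of_nonneg (Real.sinh_nonneg_iff.2 h)]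
      exact Real.self_le_sinh_iff.2 h
    · rw [abs_of_nonpos h, abs_of_nonpos (Real.sinh_nonpos_iff.2 h)]
      exact neg_le_neg (Real.sinh_le_self_iff.2 h)
  exact inv_anti₀ (by positivity) (by linarith)

lemma integral_sech_sq_pos : 0 < ∫ x, sech x ^ 2 := by
  rw [integral_pos_iff_support_of_nonneg (fun x => sq_nonneg _) memLp_sech.integrable_sq]
  have : (Function.support fun x => sech x ^ 2) = Set.univ := by
    ext x; simp [(sech_pos x).ne']
  simp [this]

/-! ### Square-integrable functions -/

lemma MemLp.int_mul {f g : ℝ → ℝ} (hf : MemLp f 2 volume) (hg : MemLp g 2 volume) :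
    Integrable (fun x => f x * g x) :=
  MemLp.integrable_mul hf hg

/-- Multiplication by a continuous bounded function preserves `L²`. -/
lemma MemLp.bounded_mul {b f : ℝ → ℝ} {c : ℝ} (hb : Continuous b) (hbc : ∀ x, |b x| ≤ c)
    (hf : MemLp f 2 volume) : MemLp (fun x => b x * f x) 2 volume := by
  refine hf.of_le_mul (c := c) (hb.aestronglyMeasurable.mul hf.1) ?_
  filter_upwards with x
  rw [norm_mul]
  exact mul_le_mul_of_nonneg_right (hbc x) (norm_nonneg _)

lemma MemLp.tanh_mul {f : ℝ → ℝ} (hf : MemLp f 2 volume) :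
    MemLp (fun x => Real.tanh x * f x) 2 volume :=
  MemLp.bounded_mul (c := 1) continuous_tanh' (fun x => (Real.abs_tanh_lt_one x).le) hf

lemma MemLp.sech_sq_mul {f : ℝ → ℝ} (hf : MemLp f 2 volume) :
    MemLp (fun x => sech x ^ 2 * f x) 2 volume :=
  MemLp.bounded_mul (c := 1) (continuous_sech.pow 2) (fun x => by
    rw [abs_of_nonneg (sq_nonneg _)]
    nlinarith [tanh_sq_add_sech_sq x, sq_nonneg (Real.tanh x)]) hf

/-- Integration by parts without boundary terms, for functions in `H¹`. -/
lemma integral_by_parts {u u' v v' : ℝ → ℝ} (hu : ∀ x, HasDerivAt u (u' x) x)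
    (hv : ∀ x, HasDerivAt v (v' x) x) (mu : MemLp u 2 volume) (mu' : MemLp u' 2 volume)
    (mv : MemLp v 2 volume) (mv' : MemLp v' 2 volume) :
    ∫ x, u x * v' x = -∫ x, u' x * v x :=
  integral_mul_deriv_eq_deriv_mul_of_integrable (fun x _ => hu x) (fun x _ => hv x)
    (MemLp.int_mul mu mv') (MemLp.int_mul mu' mv) (MemLp.int_mul mu mv)

lemma integral_add_sq_le {f g : ℝ → ℝ} (hf : MemLp f 2 volume) (hg : MemLp g 2 volume) :
    ∫ x, (f x + g x) ^ 2 ≤ 2 * (∫ x, f x ^ 2) + 2 * ∫ x, g x ^ 2 := by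
  rw [← integral_const_mul, ← integral_const_mul,
    ← integral_add (hf.integrable_sq.const_mul 2) (hg.integrable_sq.const_mul 2)]
  refine integral_mono (hf.add hg).integrable_sq
    ((hf.integrable_sq.const_mul 2).add (hg.integrable_sq.const_mul 2)) fun x => ?_
  change (f x + g x) ^ 2 ≤ 2 * f x ^ 2 + 2 * g x ^ 2
  nlinarith [sq_nonneg (f x - g x)]

/-- Young's inequality in integrated form. -/
lemma integral_mul_le_young {f g : ℝ → ℝ} (hf : MemLp f 2 volume) (hg : MemLp g 2 volume)
    {c : ℝ} (hc : 0 < c) :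
    ∫ x, f x * g x ≤ c / 2 * (∫ x, f x ^ 2) + 1 / (2 * c) * ∫ x, g x ^ 2 := by
  have i1 := hf.integrable_sq.const_mul (c / 2)
  have i2 := hg.integrable_sq.const_mul (1 / (2 * c))
  rw [← integral_const_mul, ← integral_const_mul, ← integral_add i1 i2]
  refine integral_mono (MemLp.int_mul hf hg) (i1.add i2) fun x => ?_
  change f x * g x ≤ c / 2 * f x ^ 2 + 1 / (2 * c) * g x ^ 2
  have h : c / 2 * f x ^ 2 + 1 / (2 * c) * g x ^ 2 - f x * g x
      = 1 / (2 * c) * (c * f x - g x) ^ 2 := by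
    field_simp; ring
  have : 0 ≤ 1 / (2 * c) * (c * f x - g x) ^ 2 := by positivity
  linarith

lemma sq_integral_mul_le {f g : ℝ → ℝ} (hf : MemLp f 2 volume) (hg : MemLp g 2 volume) :
    (∫ x, f x * g x) ^ 2 ≤ (∫ x, f x ^ 2) * ∫ x, g x ^ 2 := by
  -- the quadratic polynomial `t ↦ ‖t f + g‖²` is nonnegative, so its discriminant is nonpositive
  have key : ∀ t : ℝ, 0 ≤ (∫ x, f x ^ 2) * (t * t) + (2 * ∫ x, f x * g x) * t
      + ∫ x, g x ^ 2 := by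
    intro t
    have h : 0 ≤ ∫ x, (t * f x + g x) ^ 2 := integral_nonneg fun x => sq_nonneg _
    have e : (fun x => (t * f x + g x) ^ 2)
        = fun x => (t * t * f x ^ 2 + 2 * t * (f x * g x)) + g x ^ 2 := by
      ext x; ring
    have i1 := hf.integrable_sq.const_mul (t * t)
    have i2 := (MemLp.int_mul hf hg).const_mul (2 * t)
    have i3 : Integrable fun x => t * t * f x ^ 2 + 2 * t * (f x * g x) := i1.add i2
    rw [e, integral_add i3 hg.integrable_sq, integral_add i1 i2, integral_const_mul,
      integral_const_mul] at h
    linarith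
  have := discrim_le_zero key
  rw [discrim] at this
  linarith

/-! ### The first-order operator on a half-line -/

/-- On functions vanishing at `0`, the operator `d/dx + tanh` is bounded below on the positive
half-line: integrate the derivative of `(2 - tanh) p²`. -/
lemma half_line_bound {p p' : ℝ → ℝ} (hp : ∀ x, HasDerivAt p (p' x) x) (h0 : p 0 = 0)
    (mp : MemLp p 2 volume) (mp' : MemLp p' 2 volume) :
    ∫ x in Set.Ioi 0, p x ^ 2 ≤ 16 * ∫ x in Set.Ioi 0, (p' x + Real.tanh x * p x) ^ 2 := by
  have mh : MemLp (fun x => p' x + Real.tanh x * p x) 2 volume := mp'.add (MemLp.tanh_mul mp)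
  set W' : ℝ → ℝ := fun x => -(sech x ^ 2) * p x ^ 2 + (2 - Real.tanh x) * (2 * p x * p' x)
  have hW : ∀ x, HasDerivAt (fun x => (2 - Real.tanh x) * p x ^ 2) (W' x) x := by
    intro x
    have := ((hasDerivAt_tanh' x).const_sub 2).mul ((hp x).pow 2)
    refine this.congr_deriv ?_
    simp [W']
  have iW : Integrable (fun x => (2 - Real.tanh x) * p x ^ 2) := by
    have := (mp.integrable_sq.const_mul 2).sub (MemLp.int_mul (MemLp.tanh_mul mp) mp)
    convert this using 1
    ext x; simp; ring
  have iW' : Integrable W' := by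
    have := ((MemLp.int_mul (MemLp.sech_sq_mul mp) mp).neg.add
      ((MemLp.int_mul mp mp').const_mul 4)).sub
      ((MemLp.int_mul (MemLp.tanh_mul mp) mp').const_mul 2)
    convert this using 1
    ext x; simp [W']; ring
  have e : ∫ x in Set.Ioi 0, W' x = 0 := by
    rw [integral_Ioi_of_hasDerivAt_of_tendsto' (fun x _ => hW x) iW'.integrableOn
      (tendsto_zero_of_hasDerivAt_of_integrableOn_Ioi (a := 0) (fun x _ => hW x)
        iW'.integrableOn iW.integrableOn)]
    simp [h0]
  have i1 := (mp.integrable_sq.const_mul (1 / 2)).integrableOn (s := Set.Ioi 0)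
  have i2 := (mh.integrable_sq.const_mul 8).integrableOn (s := Set.Ioi 0)
  have hle : ∫ x in Set.Ioi 0, W' x ≤ ∫ x in Set.Ioi 0,
      (8 * (p' x + Real.tanh x * p x) ^ 2 - 1 / 2 * p x ^ 2) := by
    refine setIntegral_mono_on iW'.integrableOn (i2.sub i1) measurableSet_Ioi fun x hx => ?_
    have t0 : 0 ≤ Real.tanh x := by
      rw [Real.tanh_eq_sinh_div_cosh]
      exact div_nonneg (Real.sinh_nonneg_iff.2 (le_of_lt hx)) (Real.cosh_pos x).le
    have t1 := Real.tanh_lt_one x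
    have hs : sech x ^ 2 = 1 - Real.tanh x ^ 2 := by linarith [tanh_sq_add_sech_sq x]
    simp only [W', hs]
    generalize Real.tanh x = t at *
    obtain ⟨q, hq⟩ : ∃ q, q = p' x + t * p x := ⟨_, rfl⟩
    have hp' : p' x = q - t * p x := by rw [hq]; ring
    rw [← hq, hp']
    generalize p x = y
    -- Young's inequality for `(2 - t) y q`, and `sech² + 2 (2 - tanh) tanh ≥ 1`
    have a1 : 0 ≤ (y - 2 * (2 - t) * q) ^ 2 := sq_nonneg _
    have a2 : 0 ≤ (t * (4 - 3 * t)) * y ^ 2 :=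
      mul_nonneg (mul_nonneg t0 (by linarith)) (sq_nonneg y)
    have a3 : 0 ≤ (t * (4 - t)) * q ^ 2 :=
      mul_nonneg (mul_nonneg t0 (by linarith)) (sq_nonneg q)
    nlinarith
  rw [e, integral_sub i2 i1, integral_const_mul, integral_const_mul] at hle
  linarith

/-- The whole-line version of `half_line_bound`, by reflection. -/
lemma line_bound {p p' : ℝ → ℝ} (hp : ∀ x, HasDerivAt p (p' x) x) (h0 : p 0 = 0)
    (mp : MemLp p 2 volume) (mp' : MemLp p' 2 volume) :
    ∫ x, p x ^ 2 ≤ 16 * ∫ x, (p' x + Real.tanh x * p x) ^ 2 := by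
  have mh : MemLp (fun x => p' x + Real.tanh x * p x) 2 volume := mp'.add (MemLp.tanh_mul mp)
  have hr := half_line_bound hp h0 mp mp'
  have hl := half_line_bound (p := fun x => p (-x)) (p' := fun x => -p' (-x))
    (fun x => by
      simpa [Function.comp_def] using (hp (-x)).comp x (hasDerivAt_neg x)) (by simpa using h0)
    (mp.comp_measurePreserving (Measure.measurePreserving_neg volume))
    (mp'.comp_measurePreserving (Measure.measurePreserving_neg volume)).neg
  have e1 : ∫ x in Set.Ioi (0 : ℝ), p (-x) ^ 2 = ∫ x in Set.Iic 0, p x ^ 2 := by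
    simpa using integral_comp_neg_Ioi 0 (fun x => p x ^ 2)
  have e2 : ∫ x in Set.Ioi (0 : ℝ), (-p' (-x) + Real.tanh x * p (-x)) ^ 2
      = ∫ x in Set.Iic 0, (p' x + Real.tanh x * p x) ^ 2 := by
    have := integral_comp_neg_Ioi 0 (fun x => (p' x + Real.tanh x * p x) ^ 2)
    rw [neg_zero] at this
    rw [← this]
    congr 1
    ext x
    rw [Real.tanh_neg]
    ring
  rw [e1, e2] at hl
  rw [← intervalIntegral.integral_Iic_add_Ioi (b := 0) mp.integrable_sq.integrableOn
      mp.integrable_sq.integrableOn,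
    ← intervalIntegral.integral_Iic_add_Ioi (b := 0) mh.integrable_sq.integrableOn
      mh.integrable_sq.integrableOn]
  linarith

/-! ### The factorization of `L` -/

/-- `f` is twice differentiable with derivatives `f'` and `f''`, all three in `L²`. -/
structure H2 (f f' f'' : ℝ → ℝ) : Prop where
  d1 : ∀ x, HasDerivAt f (f' x) x
  d2 : ∀ x, HasDerivAt f' (f'' x) x
  m0 : MemLp f 2 volume
  m1 : MemLp f' 2 volume
  m2 : MemLp f'' 2 volume

/-- `L f`, in terms of `f` and its second derivative. -/
def Lfun (f f'' : ℝ → ℝ) (x : ℝ) : ℝ := -f'' x + (1 - 2 * sech x ^ 2) * f x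

/-- The image `h = f' + tanh · f` of `f` under the first-order factor `A` of `L = A* A`. -/
def Afun (f f' : ℝ → ℝ) (x : ℝ) : ℝ := f' x + Real.tanh x * f x

/-- The derivative of `Afun f f'`. -/
def Afun' (f f' f'' : ℝ → ℝ) (x : ℝ) : ℝ := f'' x + (sech x ^ 2 * f x + Real.tanh x * f' x)

namespace H2

variable {f f' f'' : ℝ → ℝ}

lemma memLp_A (H : H2 f f' f'') : MemLp (Afun f f') 2 volume := H.m1.add (MemLp.tanh_mul H.m0)

lemma memLp_A' (H : H2 f f' f'') : MemLp (Afun' f f' f'') 2 volume :=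
  H.m2.add ((MemLp.sech_sq_mul H.m0).add (MemLp.tanh_mul H.m1))

lemma memLp_L (H : H2 f f' f'') : MemLp (Lfun f f'') 2 volume := by
  have := (H.m2.neg.add H.m0).sub ((MemLp.sech_sq_mul H.m0).const_mul 2)
  convert this using 1
  ext x; simp [Lfun]; ring

lemma hasDerivAt_A (H : H2 f f' f'') (x : ℝ) :
    HasDerivAt (Afun f f') (Afun' f f' f'' x) x :=
  (H.d2 x).add ((hasDerivAt_tanh' x).mul (H.d1 x))

/-- The factorization `L = A* A`, where `A* = -d/dx + tanh`. -/
lemma L_eq (f f' f'' : ℝ → ℝ) (x : ℝ) :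
    Lfun f f'' x = -Afun' f f' f'' x + Real.tanh x * Afun f f' x := by
  have hs : Real.tanh x ^ 2 = 1 - sech x ^ 2 := by linarith [tanh_sq_add_sech_sq x]
  simp only [Lfun, Afun, Afun']
  linear_combination (-f x) * hs

/-- `⟨A* h, g⟩ = ⟨h, A g⟩` for `h = A f`. -/
lemma integral_L_mul_eq (H : H2 f f' f'') {g g' : ℝ → ℝ} (hg : ∀ x, HasDerivAt g (g' x) x)
    (mg : MemLp g 2 volume) (mg' : MemLp g' 2 volume) :
    ∫ x, Lfun f f'' x * g x = ∫ x, Afun f f' x * (g' x + Real.tanh x * g x) := by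
  have hp := integral_by_parts H.hasDerivAt_A hg H.memLp_A H.memLp_A' mg mg'
  have e1 : (fun x => Lfun f f'' x * g x)
      = fun x => (Real.tanh x * Afun f f' x) * g x - Afun' f f' f'' x * g x := by
    ext x; rw [L_eq f f' f'']; ring
  have e2 : (fun x => Afun f f' x * (g' x + Real.tanh x * g x))
      = fun x => (Real.tanh x * Afun f f' x) * g x + Afun f f' x * g' x := by
    ext x; ring
  have i1 := MemLp.int_mul (MemLp.tanh_mul H.memLp_A) mg
  rw [e1, e2, integral_sub i1 (MemLp.int_mul H.memLp_A' mg),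
    integral_add i1 (MemLp.int_mul H.memLp_A mg'), hp]
  ring

lemma integral_L_mul (H : H2 f f' f'') :
    ∫ x, Lfun f f'' x * f x = ∫ x, Afun f f' x ^ 2 := by
  rw [H.integral_L_mul_eq H.d1 H.m0 H.m1]
  congr 1
  ext x
  simp only [Afun]
  ring

lemma integral_L_mul_sech (H : H2 f f' f'') : ∫ x, Lfun f f'' x * sech x = 0 := by
  rw [H.integral_L_mul_eq hasDerivAt_sech memLp_sech (MemLp.tanh_mul memLp_sech).neg]
  simp

/-- Since `A A* = -d²/dx² + 1`, `‖A* h‖² = ‖h'‖² + ‖h‖² ≥ ‖h‖²`. -/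
lemma integral_h_sq_le (H : H2 f f' f'') :
    ∫ x, Afun f f' x ^ 2 ≤ ∫ x, Lfun f f'' x ^ 2 := by
  set h := Afun f f'
  set h' := Afun' f f' f''
  have mh : MemLp h 2 volume := H.memLp_A
  have mh' : MemLp h' 2 volume := H.memLp_A'
  have mt := MemLp.tanh_mul mh
  have ms := MemLp.sech_sq_mul mh
  have mt' := MemLp.tanh_mul mh'
  have hp : ∫ x, (Real.tanh x * h x) * h' x
      = -∫ x, (sech x ^ 2 * h x + Real.tanh x * h' x) * h x :=
    integral_by_parts (fun x => (hasDerivAt_tanh' x).mul (H.hasDerivAt_A x)) H.hasDerivAt_A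
      mt (ms.add mt') mh mh'
  have e1 : (fun x => Lfun f f'' x ^ 2)
      = fun x => ((h' x ^ 2 + (h x ^ 2 - (sech x ^ 2 * h x) * h x))
        - 2 * ((Real.tanh x * h x) * h' x)) := by
    ext x
    have hs : Real.tanh x ^ 2 = 1 - sech x ^ 2 := by linarith [tanh_sq_add_sech_sq x]
    rw [L_eq f f' f'']
    change (-h' x + Real.tanh x * h x) ^ 2 = _
    linear_combination (h x ^ 2) * hs
  have e2 : (fun x => (sech x ^ 2 * h x + Real.tanh x * h' x) * h x)
      = fun x => (sech x ^ 2 * h x) * h x + (Real.tanh x * h x) * h' x := by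
    ext x; ring
  have i1 := MemLp.int_mul ms mh
  have i2 := MemLp.int_mul mt mh'
  rw [e2, integral_add i1 i2] at hp
  have j1 : Integrable fun x => h x ^ 2 - sech x ^ 2 * h x * h x := mh.integrable_sq.sub i1
  have j2 : Integrable fun x => h' x ^ 2 + (h x ^ 2 - sech x ^ 2 * h x * h x) :=
    mh'.integrable_sq.add j1
  rw [e1, integral_sub j2 (i2.const_mul 2),
    integral_add mh'.integrable_sq j1, integral_sub mh.integrable_sq i1, integral_const_mul]
  have : 0 ≤ ∫ x, h' x ^ 2 := integral_nonneg fun x => sq_nonneg _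
  linarith

/-! ### `L²` bounds -/

/-- Coercivity of `L + K`. -/
lemma sq_le_of_shift (H : H2 f f' f'') {K : ℝ} (hK : 0 < K) :
    ∫ x, f x ^ 2 ≤ 1 / K ^ 2 * ∫ x, (Lfun f f'' x + K * f x) ^ 2 := by
  have mg : MemLp (fun x => Lfun f f'' x + K * f x) 2 volume := H.memLp_L.add (H.m0.const_mul K)
  have h1 := integral_mul_le_young H.m0 mg hK
  have e : (fun x => f x * (Lfun f f'' x + K * f x))
      = fun x => Lfun f f'' x * f x + K * f x ^ 2 := by ext x; ring
  rw [e, integral_add (MemLp.int_mul H.memLp_L H.m0) (H.m0.integrable_sq.const_mul K),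
    integral_const_mul, H.integral_L_mul] at h1
  have h2 : 0 ≤ ∫ x, Afun f f' x ^ 2 := integral_nonneg fun x => sq_nonneg _
  set G := ∫ x, (Lfun f f'' x + K * f x) ^ 2
  set F := ∫ x, f x ^ 2
  have h3 : K / 2 * F ≤ 1 / (2 * K) * G := by linarith
  have h4 : K / 2 * (1 / K ^ 2 * G) = 1 / (2 * K) * G := by field_simp
  exact le_of_mul_le_mul_left (h4 ▸ h3) (by positivity : (0 : ℝ) < K / 2)

/-- `f` is controlled by `A f` and its component along `ker A`. -/
lemma sq_le_of_sech (H : H2 f f' f'') :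
    ∫ x, f x ^ 2 ≤ 96 * (∫ x, Afun f f' x ^ 2)
      + 4 / (∫ x, sech x ^ 2) * (∫ x, sech x * f x) ^ 2 := by
  set S := ∫ x, sech x ^ 2 with hS
  have S0 : 0 < S := integral_sech_sq_pos
  set c := f 0
  set p : ℝ → ℝ := fun x => f x - c * sech x with hp
  set p' : ℝ → ℝ := fun x => f' x - c * -(Real.tanh x * sech x)
  have mp : MemLp p 2 volume := H.m0.sub (memLp_sech.const_mul c)
  have mp' : MemLp p' 2 volume := H.m1.sub ((MemLp.tanh_mul memLp_sech).neg.const_mul c)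
  have hb : ∫ x, p x ^ 2 ≤ 16 * ∫ x, (p' x + Real.tanh x * p x) ^ 2 :=
    line_bound (fun x => (H.d1 x).sub ((hasDerivAt_sech x).const_mul c))
      (by simp [hp, sech, c]) mp mp'
  have e : (fun x => (p' x + Real.tanh x * p x) ^ 2) = fun x => Afun f f' x ^ 2 := by
    ext x; simp only [p, p', Afun]; ring
  rw [e] at hb
  set P := ∫ x, p x ^ 2
  have hf : ∫ x, f x ^ 2 ≤ 2 * P + 2 * (c ^ 2 * S) := by
    have := integral_add_sq_le mp (memLp_sech.const_mul c)
    have e1 : (fun x => (p x + c * sech x) ^ 2) = fun x => f x ^ 2 := by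
      ext x; simp only [p]; ring
    have e2 : (fun x => (c * sech x) ^ 2) = fun x => c ^ 2 * sech x ^ 2 := by ext x; ring
    rwa [e1, e2, integral_const_mul] at this
  have hc : c * S = (∫ x, sech x * f x) - ∫ x, sech x * p x := by
    rw [← integral_sub (MemLp.int_mul memLp_sech H.m0) (MemLp.int_mul memLp_sech mp), hS,
      ← integral_const_mul]
    congr 1
    ext x; simp only [p]; ring
  have hcs : (∫ x, sech x * p x) ^ 2 ≤ S * P := sq_integral_mul_le memLp_sech mp
  set J := ∫ x, sech x * f x
  set I := ∫ x, sech x * p x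
  have h1 : c ^ 2 * S ≤ 2 / S * J ^ 2 + 2 * P := by
    have : c ^ 2 * S = 1 / S * (J - I) ^ 2 := by rw [← hc]; field_simp
    rw [this]
    have h2 : (J - I) ^ 2 ≤ 2 * J ^ 2 + 2 * (S * P) := by nlinarith [sq_nonneg (J + I)]
    calc 1 / S * (J - I) ^ 2 ≤ 1 / S * (2 * J ^ 2 + 2 * (S * P)) := by gcongr
      _ = 2 / S * J ^ 2 + 2 * P := by field_simp
  have : 4 / S * J ^ 2 = 2 * (2 / S * J ^ 2) := by ring
  linarith

/-- The `H²` norm is controlled by the `L²` norms of `(L + K) f` and `f`: the equation gives `f''`,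
and `‖f'‖² = -⟨f, f''⟩`. -/
lemma norm_le (H : H2 f f' f'') {K : ℝ} (hK : 0 ≤ K) :
    ∫ x, (f x ^ 2 + f' x ^ 2 + f'' x ^ 2) ≤
      4 * (∫ x, (Lfun f f'' x + K * f x) ^ 2) + (2 + 4 * (1 + K) ^ 2) * ∫ x, f x ^ 2 := by
  have mg : MemLp (fun x => Lfun f f'' x + K * f x) 2 volume := H.memLp_L.add (H.m0.const_mul K)
  have h1 : ∫ x, f'' x ^ 2 ≤ 2 * (∫ x, (Lfun f f'' x + K * f x) ^ 2)
      + 2 * ((1 + K) ^ 2 * ∫ x, f x ^ 2) := by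
    have i1 := mg.integrable_sq.const_mul 2
    have i2 := (H.m0.integrable_sq.const_mul ((1 + K) ^ 2)).const_mul 2
    rw [← integral_const_mul, ← integral_const_mul, ← integral_const_mul, ← integral_add i1 i2]
    refine integral_mono H.m2.integrable_sq (i1.add i2) fun x => ?_
    change f'' x ^ 2 ≤ 2 * (Lfun f f'' x + K * f x) ^ 2 + 2 * ((1 + K) ^ 2 * f x ^ 2)
    have hs := tanh_sq_add_sech_sq x
    set r := 1 - 2 * sech x ^ 2 + K with hr
    have hr1 : r ^ 2 ≤ (1 + K) ^ 2 := by
      rw [sq_le_sq, abs_of_nonneg (by linarith : 0 ≤ 1 + K), abs_le]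
      constructor <;> nlinarith [sq_nonneg (Real.tanh x), sq_nonneg (sech x)]
    have hq : f'' x = -(Lfun f f'' x + K * f x) + r * f x := by
      simp only [Lfun, hr]; ring
    have h2 : r ^ 2 * f x ^ 2 ≤ (1 + K) ^ 2 * f x ^ 2 := by gcongr
    generalize Lfun f f'' x + K * f x = g at *
    rw [hq]
    nlinarith [sq_nonneg (g + r * f x)]
  have h2 : ∫ x, f' x ^ 2 ≤ 1 / 2 * (∫ x, f x ^ 2) + 1 / 2 * ∫ x, f'' x ^ 2 := by
    have hp := integral_by_parts H.d1 H.d2 H.m0 H.m1 H.m1 H.m2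
    have hy := integral_mul_le_young H.m0.neg H.m2 one_pos
    simp only [Pi.neg_apply, neg_mul, integral_neg, hp, neg_neg, neg_sq, mul_one] at hy
    have e : (fun x => f' x * f' x) = fun x => f' x ^ 2 := by ext x; ring
    rwa [e] at hy
  have i0 := H.m0.integrable_sq
  have i1 := H.m1.integrable_sq
  have i01 : Integrable fun x => f x ^ 2 + f' x ^ 2 := i0.add i1
  rw [integral_add i01 H.m2.integrable_sq, integral_add i0 i1]
  have F0 : 0 ≤ ∫ x, f x ^ 2 := integral_nonneg fun x => sq_nonneg _
  have G0 : 0 ≤ ∫ x, (Lfun f f'' x + K * f x) ^ 2 := integral_nonneg fun x => sq_nonneg _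
  have := mul_nonneg (sq_nonneg (1 + K)) F0
  linarith

lemma of_contDiff {f : ℝ → ℝ} (hf : ContDiff ℝ 2 f) (h0 : Integrable (fun x => f x ^ 2))
    (h1 : Integrable (fun x => deriv f x ^ 2)) (h2 : Integrable (fun x => deriv (deriv f) x ^ 2)) :
    H2 f (deriv f) (deriv (deriv f)) := by
  have c1 : ContDiff ℝ 1 (deriv f) := ((contDiff_succ_iff_deriv (n := 1)).1 hf).2.2
  have c2 : Continuous (deriv (deriv f)) := c1.continuous_deriv le_rfl
  exact ⟨fun x => (hf.differentiable (by norm_num) x).hasDerivAt,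
    fun x => (c1.differentiable (by norm_num) x).hasDerivAt,
    (memLp_two_iff_integrable_sq hf.continuous.aestronglyMeasurable).2 h0,
    (memLp_two_iff_integrable_sq c1.continuous.aestronglyMeasurable).2 h1,
    (memLp_two_iff_integrable_sq c2.aestronglyMeasurable).2 h2⟩

/-- Pairing `-L f + α μ betaW'` with `sech` controls `μ`, as `L f` is orthogonal to `sech`. -/
lemma mu_sq_le (H : H2 f f' f'') {α μ : ℝ} (hα : 0 < α) :
    μ ^ 2 ≤ 1 / (α ^ 2 * ∫ x, sech x ^ 2) *
      ∫ x, (-Lfun f f'' x + α * μ * -sech x) ^ 2 := by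
  have S0 := integral_sech_sq_pos
  have mE : MemLp (fun x => -Lfun f f'' x + α * μ * -sech x) 2 volume :=
    H.memLp_L.neg.add (memLp_sech.neg.const_mul (α * μ))
  have hcs := sq_integral_mul_le mE memLp_sech
  have e : (fun x => (-Lfun f f'' x + α * μ * -sech x) * sech x)
      = fun x => -(Lfun f f'' x * sech x) - α * μ * sech x ^ 2 := by ext x; ring
  have i1 : Integrable fun x => -(Lfun f f'' x * sech x) :=
    (MemLp.int_mul H.memLp_L memLp_sech).neg
  rw [e, integral_sub i1
    (memLp_sech.integrable_sq.const_mul _), integral_neg, H.integral_L_mul_sech,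
    integral_const_mul] at hcs
  set S := ∫ x, sech x ^ 2
  set N := ∫ x, (-Lfun f f'' x + α * μ * -sech x) ^ 2
  have h1 : (α ^ 2 * S) * μ ^ 2 ≤ N := by
    refine le_of_mul_le_mul_right ?_ S0
    calc (α ^ 2 * S) * μ ^ 2 * S = (-0 - α * μ * S) ^ 2 := by ring
      _ ≤ N * S := hcs
  rw [one_div, inv_mul_eq_div, le_div_iff₀ (by positivity)]
  linarith

end H2

/-- The linearization D_W of the travelling-wave problem about the Bloch wall is
bounded away from zero. -/
theorem DW_bounded_away_from_zero (α K₂ : ℝ) (hα : 0 < α) (hK : 0 < K₂) :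
    ∃ C > 0, ∀ f₁ f₂ : ℝ → ℝ, ∀ μ : ℝ,
      ContDiff ℝ 2 f₁ → ContDiff ℝ 2 f₂ →
      Integrable (fun ξ => (f₁ ξ) ^ 2) →
      Integrable (fun ξ => (deriv f₁ ξ) ^ 2) →
      Integrable (fun ξ => (deriv (deriv f₁) ξ) ^ 2) →
      Integrable (fun ξ => (f₂ ξ) ^ 2) →
      Integrable (fun ξ => (deriv f₂ ξ) ^ 2) →
      Integrable (fun ξ => (deriv (deriv f₂) ξ) ^ 2) →
      C * ((∫ ξ : ℝ, ((f₁ ξ) ^ 2 + (deriv f₁ ξ) ^ 2 + (deriv (deriv f₁) ξ) ^ 2)) +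
           (∫ ξ : ℝ, ((f₂ ξ) ^ 2 + (deriv f₂ ξ) ^ 2 + (deriv (deriv f₂) ξ) ^ 2)) +
           μ ^ 2) ≤
        (∫ ξ : ℝ, (-Lop f₂ ξ + α * μ * betaW' ξ) ^ 2) +
        (∫ ξ : ℝ, ((Lop f₁ ξ + K₂ * f₁ ξ) + μ * betaW' ξ) ^ 2) +
        (∫ ξ : ℝ, betaW' ξ * f₂ ξ) ^ 2 := by
  have S0 := integral_sech_sq_pos
  obtain ⟨S, hS⟩ : ∃ S, S = ∫ x, sech x ^ 2 := ⟨_, rfl⟩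
  rw [← hS] at S0
  -- `A` and `B` are the constants in the bounds of `f₁` and `f₂`, and `D` is the one for `μ`
  obtain ⟨A, hA⟩ : ∃ A, A = 4 + (2 + 4 * (1 + K₂) ^ 2) * (1 / K₂ ^ 2) := ⟨_, rfl⟩
  obtain ⟨B, hB⟩ : ∃ B, B = 4 + 6 * (96 + 4 / S) := ⟨_, rfl⟩
  obtain ⟨D, hD⟩ : ∃ D, D = 1 / (α ^ 2 * S) := ⟨_, rfl⟩
  have A0 : 0 < A := by rw [hA]; positivity
  have B0 : 0 < B := by rw [hB]; positivity
  have D0 : 0 < D := by rw [hD]; positivity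
  obtain ⟨Q, hQ⟩ : ∃ Q, Q = 2 * A + 2 * B + (2 * A * S + 2 * B * (α ^ 2 * S) + 1) * D :=
    ⟨_, rfl⟩
  have Q0 : 0 < Q := by rw [hQ]; positivity
  refine ⟨1 / Q, by positivity, ?_⟩
  intro f₁ f₂ μ c1 c2 i10 i11 i12 i20 i21 i22
  have H1 := H2.of_contDiff c1 i10 i11 i12
  have H2' := H2.of_contDiff c2 i20 i21 i22
  have hN : ∫ ξ, (-Lop f₂ ξ + α * μ * betaW' ξ) ^ 2
      = ∫ x, (-Lfun f₂ (deriv (deriv f₂)) x + α * μ * -sech x) ^ 2 := rfl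
  have hM : ∫ ξ, ((Lop f₁ ξ + K₂ * f₁ ξ) + μ * betaW' ξ) ^ 2
      = ∫ x, ((Lfun f₁ (deriv (deriv f₁)) x + K₂ * f₁ x) + μ * -sech x) ^ 2 := rfl
  have hT : (∫ ξ, betaW' ξ * f₂ ξ) ^ 2 = (∫ x, sech x * f₂ x) ^ 2 := by
    have : ∫ ξ, betaW' ξ * f₂ ξ = -∫ x, sech x * f₂ x := by
      rw [← integral_neg]
      congr 1
      ext x; simp [betaW', sech]
    rw [this, neg_sq]
  rw [hN, hM, hT]
  have hμ := H2'.mu_sq_le (μ := μ) hα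
  rw [← hS, ← hD] at hμ
  have n1 := H1.norm_le hK.le
  have s1 := H1.sq_le_of_shift hK
  have n2 := H2'.norm_le le_rfl
  have s2 := H2'.sq_le_of_sech
  have a2 := H2'.integral_h_sq_le
  rw [← hS] at s2
  simp only [zero_mul, add_zero] at n2
  have mg : MemLp (fun x => Lfun f₁ (deriv (deriv f₁)) x + K₂ * f₁ x) 2 volume :=
    H1.memLp_L.add (H1.m0.const_mul K₂)
  have hsq : ∀ t : ℝ, ∫ x, (t * sech x) ^ 2 = t ^ 2 * S := by
    intro t
    rw [hS, ← integral_const_mul]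
    congr 1
    ext x; ring
  -- moving the `μ` terms to the other side
  have g1 : ∫ x, (Lfun f₁ (deriv (deriv f₁)) x + K₂ * f₁ x) ^ 2 ≤
      2 * (∫ x, ((Lfun f₁ (deriv (deriv f₁)) x + K₂ * f₁ x) + μ * -sech x) ^ 2)
        + 2 * (μ ^ 2 * S) := by
    have mE : MemLp (fun x => (Lfun f₁ (deriv (deriv f₁)) x + K₂ * f₁ x) + μ * -sech x) 2 volume :=
      mg.add (memLp_sech.neg.const_mul μ)
    have := integral_add_sq_le mE (memLp_sech.const_mul μ)
    rw [hsq] at this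
    convert this using 3
    simp
  have g2 : ∫ x, Lfun f₂ (deriv (deriv f₂)) x ^ 2 ≤
      2 * (∫ x, (-Lfun f₂ (deriv (deriv f₂)) x + α * μ * -sech x) ^ 2)
        + 2 * ((α * μ) ^ 2 * S) := by
    have mE : MemLp (fun x => -Lfun f₂ (deriv (deriv f₂)) x + α * μ * -sech x) 2 volume :=
      H2'.memLp_L.neg.add (memLp_sech.neg.const_mul (α * μ))
    have := integral_add_sq_le mE (memLp_sech.const_mul (α * μ))
    rw [hsq] at this
    convert this using 3
    simp
  generalize (∫ x, (-Lfun f₂ (deriv (deriv f₂)) x + α * μ * -sech x) ^ 2) = N at *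
  generalize hM' : (∫ x, ((Lfun f₁ (deriv (deriv f₁)) x + K₂ * f₁ x) + μ * -sech x) ^ 2) = M at *
  have M0 : 0 ≤ M := hM' ▸ integral_nonneg fun x => sq_nonneg _
  generalize (∫ x, (Lfun f₁ (deriv (deriv f₁)) x + K₂ * f₁ x) ^ 2) = G at *
  generalize hL : (∫ x, Lfun f₂ (deriv (deriv f₂)) x ^ 2) = L₂ at *
  have L0 : 0 ≤ L₂ := hL ▸ integral_nonneg fun x => sq_nonneg _
  generalize hJ : (∫ x, sech x * f₂ x) ^ 2 = T at *
  have T0 : 0 ≤ T := hJ ▸ sq_nonneg _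
  generalize (∫ x, Afun f₂ (deriv f₂) x ^ 2) = P at *
  generalize (∫ x, f₁ x ^ 2) = F₁ at *
  generalize (∫ x, f₂ x ^ 2) = F₂ at *
  generalize (∫ x, (f₁ x ^ 2 + deriv f₁ x ^ 2 + deriv (deriv f₁) x ^ 2)) = X₁ at *
  generalize (∫ x, (f₂ x ^ 2 + deriv f₂ x ^ 2 + deriv (deriv f₂) x ^ 2)) = X₂ at *
  have N0 : 0 ≤ N := by
    have : 0 ≤ D * N := (sq_nonneg μ).trans hμ
    exact nonneg_of_mul_nonneg_right this D0
  have b1 : X₁ ≤ A * G := by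
    have : (2 + 4 * (1 + K₂) ^ 2) * F₁ ≤ (2 + 4 * (1 + K₂) ^ 2) * (1 / K₂ ^ 2 * G) := by gcongr
    rw [hA]; linarith
  have b2 : X₂ ≤ B * (L₂ + T) := by
    have : 0 ≤ 4 / S * L₂ := by positivity
    rw [hB]; linarith
  have b3 : A * G ≤ A * (2 * M + 2 * (μ ^ 2 * S)) := by gcongr
  have b4 : B * (L₂ + T) ≤ B * (2 * N + 2 * ((α * μ) ^ 2 * S) + T) := by gcongr
  have b5 : (2 * A * S + 2 * B * (α ^ 2 * S) + 1) * μ ^ 2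
      ≤ (2 * A * S + 2 * B * (α ^ 2 * S) + 1) * (D * N) := by gcongr
  rw [one_div, inv_mul_le_iff₀ Q0]
  have b6 : 0 ≤ A * N := by positivity
  have b7 : 0 ≤ A * T := by positivity
  have b8 : 0 ≤ B * M := by positivity
  have b9 : 0 ≤ B * T := by positivity
  have b10 : 0 ≤ (2 * A * S + 2 * B * (α ^ 2 * S) + 1) * D * (M + T) := by positivity
  calc X₁ + X₂ + μ ^ 2 ≤ A * (2 * M) + B * (2 * N + T)
        + (2 * A * S + 2 * B * (α ^ 2 * S) + 1) * μ ^ 2 := by linarith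
    _ ≤ A * (2 * M) + B * (2 * N + T)
        + (2 * A * S + 2 * B * (α ^ 2 * S) + 1) * (D * N) := by linarith
    _ ≤ Q * (N + M + T) := by rw [hQ]; linarith

end
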